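/- Let (V, K, η) be a para-Hermitian vector space and B : V → V a linear map whose image lies in E₋, which vanishes on E₋, and which is η-skew: η(B u, v) = −η(u, B v) for all u, v ∈ V. Then B ∘ B = 0, the map e^B := id + B is invertible with inverse id − B, and K_B := e^B ∘ K ∘ e^{−B} satisfies K_B = K + 2B, K_B ∘ K_B = id, and η(K_B u, K_B v) = −η(u, v) for all u, v ∈ V; hence (K_B, η) is again a para-Hermitian structure on V. -/

import Mathlib

open Module

/-
A B-transformation maps into `E₋` and kills `E₋`, so `B² = 0` and `e^B = id + B` is an
automorphism with inverse `e^{-B} = id - B`. Skewness says that `e^{-B}` is also the `η`-adjoint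
of `e^B`, so `e^B` is `η`-orthogonal. Conjugation by any automorphism preserves involutions, and
conjugation by an orthogonal one preserves the relation `η(K u, K v) = -η(u, v)`. Finally `B`
kills `u - K u ∈ E₋`, so `B K = B = -K B`, and expanding `(id + B) K (id - B)` gives `K + 2 B`.
-/

section SquareZero

variable {R V : Type*} [Ring R] [AddCommGroup V] [Module R V] {B : V →ₗ[R] V}

theorem id_add_comp_id_sub_of_sq_zero (hB : ∀ u, B (B u) = 0) :
    (LinearMap.id + B) ∘ₗ (LinearMap.id - B) = LinearMap.id := by
  ext u
  simp [hB]

theorem id_sub_comp_id_add_of_sq_zero (hB : ∀ u, B (B u) = 0) :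
    (LinearMap.id - B) ∘ₗ (LinearMap.id + B) = LinearMap.id := by
  ext u
  simp [hB]

/-- The automorphism `e^B = id + B` attached to a square-zero endomorphism `B`, with inverse
`e^{-B} = id - B`. The exponential series stops after its linear term, so it makes sense over any
ring. -/
def expEquiv (B : V →ₗ[R] V) (hB : ∀ u, B (B u) = 0) : V ≃ₗ[R] V :=
  .ofLinearMap (LinearMap.id + B) (LinearMap.id - B)
    (id_add_comp_id_sub_of_sq_zero hB) (id_sub_comp_id_add_of_sq_zero hB)

end SquareZero

theorem apply_involution_eq_of_vanish_on_neg {R V W : Type*} [Ring R] [AddCommGroup V] [Module R V]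
    [AddCommGroup W] [Module R W] {K : V →ₗ[R] V} {B : V →ₗ[R] W}
    (hK : Function.Involutive K) (hB : ∀ u, K u = -u → B u = 0) (u : V) : B (K u) = B u := by
  have hmem : K (u - K u) = -(u - K u) := by rw [map_sub, hK, neg_sub]
  have hzero : B u - B (K u) = 0 := by rw [← map_sub, hB _ hmem]
  exact (sub_eq_zero.mp hzero).symm

theorem involutive_conj {R V W : Type*} [CommSemiring R] [AddCommMonoid V] [Module R V]
    [AddCommMonoid W] [Module R W] {K : V →ₗ[R] V} (e : V ≃ₗ[R] W)
    (hK : Function.Involutive K) : Function.Involutive (e.conj K) := fun w => by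
  simp only [LinearEquiv.conj_apply_apply, LinearEquiv.symm_apply_apply, hK (e.symm w),
    LinearEquiv.apply_symm_apply]

section Conjugation

variable {R V : Type*} [CommRing R] [AddCommGroup V] [Module R V] {K : V →ₗ[R] V}

theorem conj_apply_conj_apply_eq_neg {η : LinearMap.BilinForm R V} {e : V ≃ₗ[R] V}
    (he : η.IsOrthogonal e) (hK : ∀ u v, η (K u) (K v) = -η u v) (u v : V) :
    η (e.conj K u) (e.conj K v) = -η u v :=
  calc η (e (K (e.symm u))) (e (K (e.symm v)))
    _ = η (K (e.symm u)) (K (e.symm v)) := he _ _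
    _ = -η (e.symm u) (e.symm v) := hK _ _
    _ = -η (e (e.symm u)) (e (e.symm v)) := by rw [he]
    _ = -η u v := by simp only [LinearEquiv.apply_symm_apply]

variable {B : V →ₗ[R] V}

theorem isOrthogonal_expEquiv {η : LinearMap.BilinForm R V} (hB : ∀ u, B (B u) = 0)
    (hskew : η.IsSkewAdjoint B) : η.IsOrthogonal (expEquiv B hB) := by
  have hadj : η.IsAdjointPair η (expEquiv B hB) (expEquiv B hB).symm := by
    have h := LinearMap.isAdjointPair_id.add hskew
    rwa [← sub_eq_add_neg] at h
  exact LinearEquiv.isAdjointPair_symm_iff (f := (expEquiv B hB).toEquiv).mp hadj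

theorem expEquiv_conj (hB : ∀ u, B (B u) = 0) (hKB : ∀ u, K (B u) = -B u)
    (hBK : ∀ u, B (K u) = B u) : (expEquiv B hB).conj K = K + (2 : R) • B := by
  ext u
  calc K (u - B u) + B (K (u - B u))
    _ = K u + B u + B u := by simp only [map_sub, map_add, hKB, hBK, hB, sub_neg_eq_add, add_zero]
    _ = K u + (2 : R) • B u := by rw [two_smul, add_assoc]

end Conjugation

theorem stmt8_general {R V : Type*} [CommRing R] [AddCommGroup V] [Module R V]
    (K : V →ₗ[R] V) (hK : ∀ v, K (K v) = v)
    (η : LinearMap.BilinForm R V)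
    (hanti : ∀ u v, η (K u) (K v) = -η u v)
    (B : V →ₗ[R] V)
    (hBrange : ∀ u, K (B u) = -B u)
    (hBvanish : ∀ u, K u = -u → B u = 0)
    (hBskew : ∀ u v, η (B u) v = -η u (B v))
    (KB : V →ₗ[R] V)
    (hKB : KB = (LinearMap.id + B) ∘ₗ K ∘ₗ (LinearMap.id - B)) :
    (∀ u, B (B u) = 0) ∧
    (LinearMap.id + B) ∘ₗ (LinearMap.id - B) = LinearMap.id ∧
    (LinearMap.id - B) ∘ₗ (LinearMap.id + B) = LinearMap.id ∧
    KB = K + (2 : R) • B ∧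
    (∀ v, KB (KB v) = v) ∧
    (∀ u v, η (KB u) (KB v) = -η u v) := by
  have hB : ∀ u, B (B u) = 0 := fun u => hBvanish _ (hBrange u)
  have hBK : ∀ u, B (K u) = B u := apply_involution_eq_of_vanish_on_neg hK hBvanish
  have hskew : η.IsSkewAdjoint B := fun u v => by rw [hBskew, Pi.neg_apply, map_neg]
  obtain rfl : KB = (expEquiv B hB).conj K := hKB
  exact ⟨hB, id_add_comp_id_sub_of_sq_zero hB, id_sub_comp_id_add_of_sq_zero hB,
    expEquiv_conj hB hBrange hBK, involutive_conj _ hK,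
    conj_apply_conj_apply_eq_neg (isOrthogonal_expEquiv hB hskew) hanti⟩

/-- A B-transformation `e^B = id + B` of a para-Hermitian vector space satisfies `B² = 0`,
is invertible with inverse `id − B`, and `K_B = e^B K e^{−B} = K + 2B` is again a
para-Hermitian structure. -/
theorem stmt8 {V : Type*} [AddCommGroup V] [Module ℝ V] [FiniteDimensional ℝ V]
    (K : V →ₗ[ℝ] V) (hK : ∀ v, K (K v) = v)
    (heig : finrank ℝ (Module.End.eigenspace K 1) = finrank ℝ (Module.End.eigenspace K (-1)))
    (η : LinearMap.BilinForm ℝ V)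
    (hsymm : ∀ u v, η u v = η v u)
    (hnondeg : ∀ u, (∀ v, η u v = 0) → u = 0)
    (hanti : ∀ u v, η (K u) (K v) = - η u v)
    (B : V →ₗ[ℝ] V)
    (hBrange : ∀ u, K (B u) = - B u)
    (hBvanish : ∀ u, K u = - u → B u = 0)
    (hBskew : ∀ u v, η (B u) v = - η u (B v))
    (KB : V →ₗ[ℝ] V)
    (hKB : KB = (LinearMap.id + B) ∘ₗ K ∘ₗ (LinearMap.id - B)) :
    (∀ u, B (B u) = 0) ∧
    (LinearMap.id + B) ∘ₗ (LinearMap.id - B) = LinearMap.id ∧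
    (LinearMap.id - B) ∘ₗ (LinearMap.id + B) = LinearMap.id ∧
    KB = K + (2 : ℝ) • B ∧
    (∀ v, KB (KB v) = v) ∧
    (∀ u v, η (KB u) (KB v) = - η u v) :=
  stmt8_general K hK η hanti B hBrange hBvanish hBskew KB hKB
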